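/- Let V be a finite-dimensional real inner product space, C ∈ ℝ, and d : V → ℝ a polynomial function satisfying ⟨∇d(v), v⟩ = 2·d(v) + ½·C + (1/8)·‖v‖⁴ for all v ∈ V. Then there exists a self-adjoint endomorphism Q of V such that d(v) = (1/16)·‖v‖⁴ + ⟨v, Q v⟩ − C/4 for all v ∈ V. -/

import Mathlib

noncomputable section

open MvPolynomial

/-- The standard inner product on `ℝᵏ`. -/
def dotR {k : ℕ} (a b : Fin k → ℝ) : ℝ := ∑ i, a i * b i

/-!
By Euler's identity, `D = ∑ᵢ Xᵢ ∂ᵢ` multiplies the coefficient of a monomial by its degree, so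
the solutions of the homogeneous equation `D p = 2 p` are exactly the quadratic forms. Any
solution of `D d = 2 d + C / 2 + ‖X‖⁴ / 8` therefore differs from the particular solution
`‖X‖⁴ / 16 - C / 4` by a quadratic form, whose symmetric matrix is half its Hessian.
-/

open scoped Matrix

section EulerDerivation

variable {σ R : Type*}

section CommSemiring

variable [CommSemiring R]

variable (σ R) in
/-- The Euler operator `∑ᵢ Xᵢ ∂ᵢ` on polynomials, encoded as the derivation fixing every variable so
that `σ` may be infinite. -/
def eulerDerivation : Derivation R (MvPolynomial σ R) (MvPolynomial σ R) :=
  mkDerivation R X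

theorem eulerDerivation_monomial (m : σ →₀ ℕ) (a : R) :
    eulerDerivation σ R (monomial m a) = m.degree • monomial m a := by
  have hshift (i : σ) (hi : i ∈ m.support) :
      monomial (m - Finsupp.single i 1) (m i : R) * X i = monomial m (m i : R) := by
    rw [X, monomial_mul, mul_one, Finsupp.sub_add_single_one_cancel (Finsupp.mem_support_iff.1 hi)]
  simp only [eulerDerivation, mkDerivation_monomial, Finsupp.sum, smul_eq_mul]
  rw [Finset.sum_congr rfl hshift, ← map_sum, smul_monomial, smul_monomial]
  simp [Finsupp.degree_apply, mul_comm]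

theorem eulerDerivation_apply [Fintype σ] (p : MvPolynomial σ R) :
    eulerDerivation σ R p = ∑ i, X i * pderiv i p := by
  induction p using MvPolynomial.induction_on' with
  | monomial m a =>
    simp only [eulerDerivation_monomial, X_mul_pderiv_monomial, Finsupp.degree_eq_sum,
      Finset.sum_smul]
  | add p q hp hq => simp only [map_add, hp, hq, mul_add, Finset.sum_add_distrib]

theorem coeff_eulerDerivation (p : MvPolynomial σ R) (m : σ →₀ ℕ) :
    coeff m (eulerDerivation σ R p) = m.degree * coeff m p := by
  classical
  induction p using MvPolynomial.induction_on' with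
  | monomial u a =>
    rw [eulerDerivation_monomial, coeff_smul, coeff_monomial, nsmul_eq_mul]
    split_ifs with hum
    · rw [hum]
    · simp
  | add p q hp hq => rw [map_add, coeff_add, coeff_add, hp, hq, mul_add]

theorem isHomogeneous_iff_eulerDerivation_eq [IsCancelMulZero R] [CharZero R]
    {p : MvPolynomial σ R} {n : ℕ} :
    p.IsHomogeneous n ↔ eulerDerivation σ R p = n • p := by
  have hcoeff : p.IsHomogeneous n ↔ ∀ m, coeff m p ≠ 0 → m.degree = n := by
    rw [Finsupp.degree_eq_weight_one]
    rfl
  rw [hcoeff, MvPolynomial.ext_iff]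
  refine forall_congr' fun m ↦ ?_
  rw [coeff_eulerDerivation, coeff_smul, nsmul_eq_mul, mul_eq_mul_right_iff, Nat.cast_inj,
    or_iff_not_imp_right]

end CommSemiring

theorem isHomogeneous_sub_of_eulerDerivation_sub_eq [CommRing R] [IsCancelMulZero R]
    [CharZero R] {p q : MvPolynomial σ R} {n : ℕ}
    (h : eulerDerivation σ R p - n • p = eulerDerivation σ R q - n • q) :
    (p - q).IsHomogeneous n := by
  rw [isHomogeneous_iff_eulerDerivation_eq, map_sub, smul_sub]
  exact sub_eq_sub_iff_sub_eq_sub.1 h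

end EulerDerivation

section Hessian

variable {σ R : Type*} [CommSemiring R]

theorem pderiv_pderiv_comm (i j : σ) (p : MvPolynomial σ R) :
    pderiv i (pderiv j p) = pderiv j (pderiv i p) := by
  classical
  ext m
  obtain rfl | hij := eq_or_ne i j
  · rfl
  · simp only [coeff_pderiv, Finsupp.add_apply, Finsupp.single_eq_of_ne hij,
      Finsupp.single_eq_of_ne hij.symm, add_zero, add_right_comm m (Finsupp.single i 1)]
    ring

/-- The Hessian matrix of the polynomial `p` at the point `v`. -/
def hessian (p : MvPolynomial σ R) (v : σ → R) : Matrix σ σ R :=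
  .of fun i j ↦ eval v (pderiv j (pderiv i p))

theorem isSymm_hessian (p : MvPolynomial σ R) (v : σ → R) : (hessian p v).IsSymm :=
  .ext fun i j ↦ congrArg (eval v) (pderiv_pderiv_comm i j p)

theorem hessian_eq_hessian_of_isHomogeneous_two {p : MvPolynomial σ R} (hp : p.IsHomogeneous 2)
    (v w : σ → R) : hessian p v = hessian p w := by
  ext i j
  have hdeg : (pderiv j (pderiv i p)).totalDegree = 0 :=
    (totalDegree_zero_iff_isHomogeneous σ).2 hp.pderiv.pderiv
  rw [hessian, hessian, Matrix.of_apply, Matrix.of_apply, totalDegree_eq_zero_iff_eq_C.1 hdeg,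
    eval_C, eval_C]

variable [Fintype σ]

theorem dotProduct_eval_pderiv_of_isHomogeneous {p : MvPolynomial σ R} {n : ℕ}
    (hp : p.IsHomogeneous n) (v : σ → R) :
    (v ⬝ᵥ fun i ↦ eval v (pderiv i p)) = n • eval v p := by
  simpa [dotProduct] using congrArg (eval v) hp.sum_X_mul_pderiv

-- The truncated `n - 1` is harmless: for `n = 0` all derivatives of `p` vanish.
theorem hessian_mulVec_of_isHomogeneous {p : MvPolynomial σ R} {n : ℕ}
    (hp : p.IsHomogeneous n) (v : σ → R) :
    hessian p v *ᵥ v = (n - 1) • fun i ↦ eval v (pderiv i p) := by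
  ext i
  rw [Matrix.mulVec, dotProduct_comm]
  exact dotProduct_eval_pderiv_of_isHomogeneous hp.pderiv v

theorem dotProduct_hessian_mulVec_of_isHomogeneous {p : MvPolynomial σ R} {n : ℕ}
    (hp : p.IsHomogeneous n) (v : σ → R) :
    v ⬝ᵥ hessian p v *ᵥ v = ((n - 1) * n) • eval v p := by
  rw [hessian_mulVec_of_isHomogeneous hp, dotProduct_smul,
    dotProduct_eval_pderiv_of_isHomogeneous hp, mul_smul]

theorem exists_isSymm_eval_eq_dotProduct_mulVec [Invertible (2 : R)] {p : MvPolynomial σ R}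
    (hp : p.IsHomogeneous 2) :
    ∃ A : Matrix σ σ R, A.IsSymm ∧ ∀ v, eval v p = v ⬝ᵥ A *ᵥ v := by
  refine ⟨⅟(2 : R) • hessian p 0, (isSymm_hessian p 0).smul _, fun v ↦ ?_⟩
  rw [hessian_eq_hessian_of_isHomogeneous_two hp 0 v, Matrix.smul_mulVec, dotProduct_smul,
    dotProduct_hessian_mulVec_of_isHomogeneous hp]
  simp

end Hessian

theorem mulVec_dotProduct_of_isSymm {σ R : Type*} [CommSemiring R] [Fintype σ]
    {A : Matrix σ σ R} (hA : A.IsSymm) (u w : σ → R) : (A *ᵥ u) ⬝ᵥ w = u ⬝ᵥ A *ᵥ w := by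
  rw [dotProduct_comm, ← Matrix.dotProduct_transpose_mulVec, hA.eq]

section ParticularSolution

theorem isHomogeneous_psum (σ R : Type*) [Fintype σ] [CommSemiring R] (n : ℕ) :
    (psum σ R n).IsHomogeneous n :=
  .sum _ _ _ fun i _ ↦ isHomogeneous_X_pow i n

theorem eval_psum_two {σ R : Type*} [Fintype σ] [CommSemiring R] (v : σ → R) :
    eval v (psum σ R 2) = v ⬝ᵥ v := by
  simp [psum, dotProduct, sq]

variable {σ K : Type*} [Fintype σ] [Field K]

variable (σ) in
/-- The polynomial `‖X‖⁴ / 16 - c / 4`, a particular solution `p` of the Euler equation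
`∑ᵢ Xᵢ ∂ᵢp = 2 p + c / 2 + ‖X‖⁴ / 8`; here `‖X‖²` is the power sum `psum σ K 2`. -/
def particularSolution (c : K) : MvPolynomial σ K :=
  (1 / 16 : K) • psum σ K 2 ^ 2 - C (c / 4)

theorem eval_particularSolution (c : K) (v : σ → K) :
    eval v (particularSolution σ c) = 1 / 16 * (v ⬝ᵥ v) ^ 2 - c / 4 := by
  simp [particularSolution, eval_psum_two]

variable [CharZero K]

theorem eulerDerivation_particularSolution (c : K) :
    eulerDerivation σ K (particularSolution σ c) - 2 • particularSolution σ c =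
      C (c / 2) + C (1 / 8) * psum σ K 2 ^ 2 := by
  have hquartic : eulerDerivation σ K (psum σ K 2 ^ 2) = 4 • psum σ K 2 ^ 2 :=
    isHomogeneous_iff_eulerDerivation_eq.1 ((isHomogeneous_psum σ K 2).pow 2)
  have heuler : eulerDerivation σ K (particularSolution σ c) =
      (1 / 16 : K) • 4 • psum σ K 2 ^ 2 := by
    rw [particularSolution, map_sub, Derivation.map_smul, hquartic, derivation_C, sub_zero]
  refine MvPolynomial.funext fun v ↦ ?_
  simp only [heuler, map_sub, map_add, map_mul, map_pow, smul_eval, eval_C,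
    eval_particularSolution, eval_psum_two, nsmul_eq_mul, map_natCast]
  push_cast
  ring

end ParticularSolution

theorem stmt_10_general {σ K : Type*} [Fintype σ] [Field K] [CharZero K] (c : K)
    (d : MvPolynomial σ K)
    (h : ∀ v : σ → K,
      ∑ i, v i * eval v (pderiv i d) = 2 * eval v d + (1 / 2) * c + (1 / 8) * (v ⬝ᵥ v) ^ 2) :
    ∃ Q : (σ → K) →ₗ[K] (σ → K), (∀ u w, Q u ⬝ᵥ w = u ⬝ᵥ Q w) ∧
      ∀ v, eval v d = (1 / 16) * (v ⬝ᵥ v) ^ 2 + v ⬝ᵥ Q v - c / 4 := by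
  have hd : eulerDerivation σ K d - 2 • d = C (c / 2) + C (1 / 8) * psum σ K 2 ^ 2 :=
    MvPolynomial.funext fun v ↦ by
      simp only [eulerDerivation_apply, map_sub, map_add, map_mul, map_pow, map_sum,
        eval_X, eval_C, h, eval_psum_two, nsmul_eq_mul, map_natCast]
      push_cast
      ring
  have hquad : (d - particularSolution σ c).IsHomogeneous 2 :=
    isHomogeneous_sub_of_eulerDerivation_sub_eq
      (hd.trans (eulerDerivation_particularSolution c).symm)
  have : Invertible (2 : K) := invertibleOfNonzero two_ne_zero
  obtain ⟨A, hA, hAv⟩ := exists_isSymm_eval_eq_dotProduct_mulVec hquad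
  refine ⟨A.mulVecLin, mulVec_dotProduct_of_isSymm hA, fun v ↦ ?_⟩
  rw [Matrix.mulVecLin_apply, ← hAv, map_sub, eval_particularSolution]
  ring

/-- Let `V = ℝⁿ`, `C ∈ ℝ`, and `d` a polynomial function on `V` satisfying
`⟨∇d(v), v⟩ = 2·d(v) + ½·C + (1/8)·‖v‖⁴` for all `v` (the gradient having components `∂ᵢd`).
Then there is a self-adjoint endomorphism `Q` of `V` with
`d(v) = (1/16)·‖v‖⁴ + ⟨v, Qv⟩ − C/4` for all `v`. -/
theorem stmt_10 (n : ℕ) (C : ℝ) (d : MvPolynomial (Fin n) ℝ)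
    (h : ∀ v : Fin n → ℝ,
      (∑ i : Fin n, v i * MvPolynomial.eval v (pderiv i d))
        = 2 * MvPolynomial.eval v d + (1 / 2) * C + (1 / 8) * (dotR v v) ^ 2) :
    ∃ Q : (Fin n → ℝ) →ₗ[ℝ] (Fin n → ℝ),
      (∀ u w : Fin n → ℝ, dotR (Q u) w = dotR u (Q w)) ∧
      ∀ v : Fin n → ℝ,
        MvPolynomial.eval v d = (1 / 16) * (dotR v v) ^ 2 + dotR v (Q v) - C / 4 :=
  stmt_10_general C d h
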